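/- (i) A uniformly continuous Markov system M is consistent if and only if F(Λ) ∈ P(M) for every Λ ∈ E_⊥(M). (ii) M is consistent if M is uniformly continuous and (Rf)(F(σ)) ≤ (Uf)(F(σ)) for every σ ∈ F^{−1}(Ω) and every bounded nonnegative Borel function f on K. -/

import Mathlib

open MeasureTheory Filter Topology
open scoped ENNReal NNReal Classical

noncomputable section

/-- A countable Markov system `(K_{i(e)}, w_e, p_e)_{e ∈ E}` on a metric space `K`:
a partition `(K_j)_{j ∈ N}` of `K` into nonempty Borel sets, source and target maps
`i, t : E → N` (`i` surjective), and for each `e ∈ E` Borel maps `w_e` and probability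
functions `p_e` (extended by zero outside `K_{i(e)}`) with
`∑_{e, i(e)=j} p_e(y) = 1` for `y ∈ K_j`. -/
structure MarkovSystem (K : Type*) [MetricSpace K] [MeasurableSpace K]
    (N : Type*) (E : Type*) where
  Kset : N → Set K
  Kset_nonempty : ∀ j, (Kset j).Nonempty
  Kset_measurable : ∀ j, MeasurableSet (Kset j)
  Kset_disjoint : Pairwise (Function.onFun Disjoint Kset)
  Kset_cover : (⋃ j, Kset j) = Set.univ
  i : E → N
  t : E → N
  i_surj : Function.Surjective i
  w : E → K → K
  p : E → K → ℝ
  w_measurable : ∀ e, Measurable (w e)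
  p_measurable : ∀ e, Measurable (p e)
  p_nonneg : ∀ e x, 0 ≤ p e x
  p_le_one : ∀ e x, p e x ≤ 1
  p_zero_outside : ∀ e x, x ∉ Kset (i e) → p e x = 0
  w_mapsTo : ∀ e, Set.MapsTo (w e) (Kset (i e)) (Kset (t e))
  p_pos_somewhere : ∀ e, ∃ x ∈ Kset (i e), 0 < p e x
  p_tsum_one : ∀ j, ∀ x ∈ Kset j, (∑' e : {e : E // i e = j}, p e.val x) = 1

/-- `Ē = E ∪ {∞}` (one-point compactification); with `E` countable its Borel σ-algebra
consists of all subsets. -/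
instance optionMeasurableSpace (E : Type*) : MeasurableSpace (Option E) := ⊤

/-- The code space `Σ̄ = Ē^ℤ`, carrying the product σ-algebra. -/
abbrev CodeSpace (E : Type*) : Type _ := ℤ → Option E

/-- The left shift `S` on the code space, `(Sσ)_{k-1} = σ_k`. -/
def shiftMap (E : Type*) : CodeSpace E → CodeSpace E := fun σ k => σ (k + 1)

/-- The cylinder set `_m[es₀, …, es_{n}] = {σ : σ_{m+k} = es_k}`. -/
def cylSetL {E : Type*} (m : ℤ) (es : List (Option E)) : Set (CodeSpace E) :=
  {σ | ∀ (k : ℕ) (h : k < es.length), σ (m + (k : ℤ)) = es.get ⟨k, h⟩}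

/-- The σ-algebra `𝓕` generated by the cylinder sets `_m[e_m, …, e_0]`, `m ≤ 0`. -/
def pastAlgebra (E : Type*) : MeasurableSpace (CodeSpace E) :=
  MeasurableSpace.generateFrom
    {A | ∃ es : List (Option E), es ≠ [] ∧ A = cylSetL (1 - (es.length : ℤ)) es}

/-- The conditional entropy `h_S(Λ) = H_Λ((_1[e])_{e ∈ Ē} | 𝓕)`. -/
def entropyS {E : Type*} (Λ : Measure (CodeSpace E)) : ℝ≥0∞ :=
  ∑' eo : Option E,
    ∫⁻ σ, ENNReal.ofReal
        (Real.negMulLog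
          ((Λ[Set.indicator {τ : CodeSpace E | τ 1 = eo} (fun _ => (1 : ℝ)) | pastAlgebra E]) σ)) ∂Λ

namespace MarkovSystem

variable {K : Type*} [MetricSpace K] [MeasurableSpace K] {N E : Type*}

/-- The Markov operator `Uf = ∑_e p_e · (f ∘ w_e)` acting on nonnegative Borel functions. -/
def markovOp (M : MarkovSystem K N E) (f : K → ℝ≥0∞) : K → ℝ≥0∞ :=
  fun x => ∑' e : E, ENNReal.ofReal (M.p e x) * f (M.w e x)

/-- The adjoint operator `U*` acting on measures, `(U*ν)(B) = ∫ U(1_B) dν`. -/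
def adjOp (M : MarkovSystem K N E) (ν : Measure K) : Measure K :=
  Measure.sum fun e : E =>
    Measure.map (M.w e) (ν.withDensity fun x => ENNReal.ofReal (M.p e x))

/-- `μ ∈ P(M)`: `μ` is an invariant Borel probability measure, `U*μ = μ`. -/
def IsInvariantMeasure (M : MarkovSystem K N E) (μ : Measure K) : Prop :=
  IsProbabilityMeasure μ ∧ M.adjOp μ = μ

/-- The path space `Σ_G`: all coordinates lie in `E` and `i(σ_{n+1}) = t(σ_n)`. -/
def pathSpace (M : MarkovSystem K N E) : Set (CodeSpace E) :=
  {σ | ∀ n : ℤ, ∃ e e' : E, σ n = some e ∧ σ (n + 1) = some e' ∧ M.i e' = M.t e}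

/-- `T_j = {σ ∈ Σ_G : t(σ_0) = j}`. -/
def Tset (M : MarkovSystem K N E) (j : N) : Set (CodeSpace E) :=
  {σ | σ ∈ M.pathSpace ∧ ∃ e : E, σ 0 = some e ∧ M.t e = j}

/-- `w` extended to `Ē`, with `w_∞ = id`. -/
def wext (M : MarkovSystem K N E) : Option E → K → K := fun o => o.elim id M.w

/-- `p` extended to `Ē`, with `p_∞ = 0`. -/
def pext (M : MarkovSystem K N E) : Option E → K → ℝ := fun o => o.elim (fun _ => 0) M.p

/-- `i` extended to `Ē`, with `i(∞) = j₀`. -/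
def iext (M : MarkovSystem K N E) (j0 : N) : Option E → N := fun o => o.elim j0 M.i

/-- `t` extended to `Ē`, with `t(∞) = j₀`. -/
def text (M : MarkovSystem K N E) (j0 : N) : Option E → N := fun o => o.elim j0 M.t

/-- `iterW M σ n y = w_{σ_0} ∘ w_{σ_{-1}} ∘ ⋯ ∘ w_{σ_{-n}} (y)`. -/
def iterW (M : MarkovSystem K N E) (σ : CodeSpace E) : ℕ → K → K
  | 0, y => M.wext (σ 0) y
  | n + 1, y => M.iterW σ n (M.wext (σ (-(n + 1 : ℤ))) y)

/-- `orbit M j0 xp σ n = w_{σ_0} ∘ ⋯ ∘ w_{σ_{-n}} (x_{i(σ_{-n})})`. -/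
def orbit (M : MarkovSystem K N E) (j0 : N) (xp : N → K) (σ : CodeSpace E) (n : ℕ) : K :=
  M.iterW σ n (xp (M.iext j0 (σ (-(n : ℤ)))))

/-- `D`: the set of `σ ∈ Σ_G` for which `lim_{m → -∞} w_{σ_0} ∘ ⋯ ∘ w_{σ_m}(x_{i(σ_m)})` exists. -/
def codeDomain (M : MarkovSystem K N E) (j0 : N) (xp : N → K) : Set (CodeSpace E) :=
  {σ | σ ∈ M.pathSpace ∧ ∃ l : K, Tendsto (fun n : ℕ => M.orbit j0 xp σ n) atTop (𝓝 l)}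

/-- The coding map `F`: the above limit on `D`, and `x_{t(σ_0)}` elsewhere. -/
def code (M : MarkovSystem K N E) (j0 : N) (xp : N → K) (σ : CodeSpace E) : K :=
  if h : σ ∈ M.codeDomain j0 xp then h.2.choose else xp (M.text j0 (σ 0))

/-- `Λ ∈ E(M)`: `Λ` is a shift-invariant Borel probability measure with `Λ(D) = 1` and
`E_Λ(1_{_1[e]} | 𝓕) = p_e ∘ F` `Λ`-a.e. for every `e ∈ E` (an equilibrium state). -/
def IsEquilibrium (M : MarkovSystem K N E) (j0 : N) (xp : N → K)
    (Λ : Measure (CodeSpace E)) : Prop :=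
  IsProbabilityMeasure Λ ∧ Measure.map (shiftMap E) Λ = Λ ∧
    Λ (M.codeDomain j0 xp) = 1 ∧
    ∀ e : E,
      (Λ[Set.indicator {σ : CodeSpace E | σ 1 = some e} (fun _ => (1 : ℝ)) | pastAlgebra E])
        =ᵐ[Λ] fun σ => M.p e (M.code j0 xp σ)

/-- `pbar` is the family of continuous extensions `p̄_e` of `p_e|_{K_{i(e)}}` to the closure
of `K_{i(e)}`, extended further by zero on `K`. -/
def IsUCExtensionP (M : MarkovSystem K N E) (pbar : E → K → ℝ) : Prop :=
  ∀ e : E, ContinuousOn (pbar e) (closure (M.Kset (M.i e))) ∧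
    (∀ x ∈ M.Kset (M.i e), pbar e x = M.p e x) ∧
    (∀ x, x ∉ closure (M.Kset (M.i e)) → pbar e x = 0)

/-- `wb` is a family of continuous extensions `w̄_e` of `w_e|_{K_{i(e)}}` to the closure
of `K_{i(e)}`. -/
def IsUCExtensionW (M : MarkovSystem K N E) (wb : E → K → K) : Prop :=
  ∀ e : E, ContinuousOn (wb e) (closure (M.Kset (M.i e))) ∧
    (∀ x ∈ M.Kset (M.i e), wb e x = M.w e x)

/-- The Markov system is uniformly continuous: each `w_e|_{K_{i(e)}}` and `p_e|_{K_{i(e)}}`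
is uniformly continuous. -/
def IsUniformlyContinuous (M : MarkovSystem K N E) : Prop :=
  ∀ e : E, UniformContinuousOn (M.w e) (M.Kset (M.i e)) ∧
    UniformContinuousOn (M.p e) (M.Kset (M.i e))

/-- `∂p_e = p̄_e · 1_{cl(K_{i(e)}) \ K_{i(e)}}`. -/
def dp (M : MarkovSystem K N E) (pbar : E → K → ℝ) (e : E) : K → ℝ :=
  Set.indicator (closure (M.Kset (M.i e)) \ M.Kset (M.i e)) (pbar e)

/-- `Λ ∈ Ẽ(M)` (asymptotic state): shift-invariant probability with `Λ(D) = 1` and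
`E_Λ(1_{_1[e]} | 𝓕) = (p̄_e ∘ F)·1_{T_{i(e)}}` `Λ`-a.e. for every `e`. -/
def IsAsymptotic (M : MarkovSystem K N E) (j0 : N) (xp : N → K) (pbar : E → K → ℝ)
    (Λ : Measure (CodeSpace E)) : Prop :=
  IsProbabilityMeasure Λ ∧ Measure.map (shiftMap E) Λ = Λ ∧
    Λ (M.codeDomain j0 xp) = 1 ∧
    ∀ e : E,
      (Λ[Set.indicator {σ : CodeSpace E | σ 1 = some e} (fun _ => (1 : ℝ)) | pastAlgebra E])
        =ᵐ[Λ] Set.indicator (M.Tset (M.i e)) (fun σ => pbar e (M.code j0 xp σ))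

/-- `Λ ∈ E_⊥(M)`: shift-invariant probability with `Λ(D) = 1` and
`E_Λ(1_{_1[e]} | 𝓕) = (∂p_e ∘ F)·1_{T_{i(e)}}` `Λ`-a.e. for every `e`. -/
def IsPerp (M : MarkovSystem K N E) (j0 : N) (xp : N → K) (pbar : E → K → ℝ)
    (Λ : Measure (CodeSpace E)) : Prop :=
  IsProbabilityMeasure Λ ∧ Measure.map (shiftMap E) Λ = Λ ∧
    Λ (M.codeDomain j0 xp) = 1 ∧
    ∀ e : E,
      (Λ[Set.indicator {σ : CodeSpace E | σ 1 = some e} (fun _ => (1 : ℝ)) | pastAlgebra E])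
        =ᵐ[Λ] Set.indicator (M.Tset (M.i e)) (fun σ => M.dp pbar e (M.code j0 xp σ))

/-- `G = ⋃_{k ≥ 0} ⋃_{j ∈ N} S^{-k}(F^{-1}(K_j) ∩ T_j)`. -/
def Gset (M : MarkovSystem K N E) (j0 : N) (xp : N → K) : Set (CodeSpace E) :=
  ⋃ (k : ℕ) (j : N), (shiftMap E)^[k] ⁻¹' ((M.code j0 xp) ⁻¹' (M.Kset j) ∩ M.Tset j)

/-- `M` is non-degenerate: for every asymptotic state `Λ` there is `i ∈ N` with
`Λ(T_i ∩ F^{-1}(K_i)) > 0`. -/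
def IsNonDegenerate (M : MarkovSystem K N E) (j0 : N) (xp : N → K) (pbar : E → K → ℝ) : Prop :=
  ∀ Λ : Measure (CodeSpace E), M.IsAsymptotic j0 xp pbar Λ →
    ∃ i : N, 0 < Λ (M.Tset i ∩ (M.code j0 xp) ⁻¹' (M.Kset i))

/-- `M` is consistent: `F(Λ) ∈ P(M)` for every asymptotic state `Λ`. -/
def IsConsistent (M : MarkovSystem K N E) (j0 : N) (xp : N → K) (pbar : E → K → ℝ) : Prop :=
  ∀ Λ : Measure (CodeSpace E), M.IsAsymptotic j0 xp pbar Λ →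
    M.IsInvariantMeasure (Measure.map (M.code j0 xp) Λ)

/-- `Rf = ∑_e ∂p_e · (f ∘ w̄_e)`. -/
def Rop (M : MarkovSystem K N E) (pbar : E → K → ℝ) (wb : E → K → K)
    (f : K → ℝ≥0∞) : K → ℝ≥0∞ :=
  fun x => ∑' e : E, ENNReal.ofReal (M.dp pbar e x) * f (wb e x)

/-- `Ω = ⋂_{n ≥ 1} {R^n 1 ≥ 1}`. -/
def OmegaSet (M : MarkovSystem K N E) (pbar : E → K → ℝ) (wb : E → K → K) : Set K :=
  ⋂ n : ℕ, {x : K | 1 ≤ (M.Rop pbar wb)^[n + 1] (fun _ => 1) x}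

/-- `ξ_j = ∑_{e, i(e) = j} sup_{x ∈ K_j} p_e(x)`. -/
def xi (M : MarkovSystem K N E) (j : N) : ℝ≥0∞ :=
  ∑' e : {e : E // M.i e = j}, ⨆ x ∈ M.Kset j, ENNReal.ofReal (M.p e.val x)

/-- `M` has a dominating Markov chain: `ξ_j < ∞` for all `j ∈ N`. -/
def HasDominatingChain (M : MarkovSystem K N E) : Prop := ∀ j : N, M.xi j ≠ ⊤

/-- `ξ_j · q_{j j'} = ∑_{e, i(e) = j, t(e) = j'} sup_{x ∈ K_j} p_e(x)`. -/
def xiq (M : MarkovSystem K N E) (j j' : N) : ℝ≥0∞ :=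
  ∑' e : {e : E // M.i e = j ∧ M.t e = j'}, ⨆ x ∈ M.Kset j, ENNReal.ofReal (M.p e.val x)

/-- `c = ∑_{j'} sup_j ξ_j q_{j j'}`. -/
def cConst (M : MarkovSystem K N E) : ℝ≥0∞ := ∑' j' : N, ⨆ j : N, M.xiq j j'

/-- `α^{x_0}_n({j}) = (1/n) ∑_{k=1}^n ((U*)^k δ_{x_0})(K_j)`. -/
def alphaMeas (M : MarkovSystem K N E) (x0 : K) (n : ℕ) (j : N) : ℝ≥0∞ :=
  (n : ℝ≥0∞)⁻¹ * ∑ k ∈ Finset.range n, (M.adjOp^[k + 1] (Measure.dirac x0)) (M.Kset j)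

/-- Condition (T) at `x_0`: the sequence `(α^{x_0}_n)_n` is uniformly tight. -/
def ConditionT (M : MarkovSystem K N E) (x0 : K) : Prop :=
  ∀ ε : ℝ, 0 < ε → ∃ V : Finset N,
    ∀ n : ℕ, (∑' j : {j : N // j ∉ V}, M.alphaMeas x0 (n + 1) j.val) < ENNReal.ofReal ε

/-- `M` is contractive with contraction rate `a`:
`∑_{e, i(e) = j} p_e(x) d(w_e x, w_e y) ≤ a·d(x, y)` on each `K_j`. -/
def IsContractive (M : MarkovSystem K N E) (a : ℝ) : Prop :=
  ∀ j : N, ∀ x ∈ M.Kset j, ∀ y ∈ M.Kset j,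
    (∑' e : {e : E // M.i e = j},
        ENNReal.ofReal (M.p e.val x * dist (M.w e.val x) (M.w e.val y)))
      ≤ ENNReal.ofReal (a * dist x y)

/-- `L(x) = ∑_j d(x, x_j)·1_{K_j}(x)`. -/
def Lfun (M : MarkovSystem K N E) (xp : N → K) : K → ℝ≥0∞ :=
  fun x => ∑' j : N, Set.indicator (M.Kset j) (fun y => ENNReal.ofReal (dist y (xp j))) x

/-- `b = sup_j sup_{x ∈ K_j} ∑_{e, i(e) = j} p_e(x)·d(w_e(x_{i(e)}), x_{t(e)})`. -/
def bConst (M : MarkovSystem K N E) (xp : N → K) : ℝ≥0∞ :=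
  ⨆ j : N, ⨆ x ∈ M.Kset j,
    ∑' e : {e : E // M.i e = j},
      ENNReal.ofReal (M.p e.val x * dist (M.w e.val (xp (M.i e.val))) (xp (M.t e.val)))

/-- `P^m_x` evaluated on a word: `p_{e_0}(x)·p_{e_1}(w_{e_0}x)·⋯`. -/
def wordProb (M : MarkovSystem K N E) : List (Option E) → K → ℝ
  | [], _ => 1
  | o :: rest, x => M.pext o x * M.wordProb rest (M.wext o x)

/-- `Λ = Φ(μ)`: `Λ` is a shift-invariant Borel probability measure with
`Λ(_m[e_m, …, e_n]) = ∫ P^m_x(_m[e_m, …, e_n]) dμ(x)` for all cylinders with `m ≤ 0`. -/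
def IsPhiOf (M : MarkovSystem K N E) (μ : Measure K) (Λ : Measure (CodeSpace E)) : Prop :=
  IsProbabilityMeasure Λ ∧ Measure.map (shiftMap E) Λ = Λ ∧
    ∀ m : ℤ, m ≤ 0 → ∀ es : List (Option E),
      Λ (cylSetL m es) = ∫⁻ x, ENNReal.ofReal (M.wordProb es x) ∂μ

/-- The (negative of the) energy function: `-u(σ) = -log p_{σ_1}(F(σ))` on `D`
(`+∞` if `p_{σ_1}(F(σ)) = 0`) and `+∞` off `D`, valued in `[0, ∞]`. -/
def negEnergy (M : MarkovSystem K N E) (j0 : N) (xp : N → K) (σ : CodeSpace E) : ℝ≥0∞ :=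
  if σ ∈ M.codeDomain j0 xp then
    (σ 1).elim ⊤ fun e =>
      if M.p e (M.code j0 xp σ) = 0 then ⊤
      else ENNReal.ofReal (-Real.log (M.p e (M.code j0 xp σ)))
  else ⊤

/-- The free energy `h_S(Λ) + ∫ u dΛ`, as an extended real number. -/
def freeEnergy (M : MarkovSystem K N E) (j0 : N) (xp : N → K)
    (Λ : Measure (CodeSpace E)) : EReal :=
  (entropyS Λ : EReal) - ((∫⁻ σ, M.negEnergy j0 xp σ ∂Λ : ℝ≥0∞) : EReal)

/-- `Λ₀ ∈ E(u)`: `Λ₀` is a thermodynamic equilibrium state for the energy function `u`. -/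
def IsEquilibriumForU (M : MarkovSystem K N E) (j0 : N) (xp : N → K)
    (Λ0 : Measure (CodeSpace E)) : Prop :=
  IsProbabilityMeasure Λ0 ∧ Measure.map (shiftMap E) Λ0 = Λ0 ∧ entropyS Λ0 ≠ ⊤ ∧
    M.freeEnergy j0 xp Λ0 =
      sSup {r : EReal | ∃ Λ : Measure (CodeSpace E),
        IsProbabilityMeasure Λ ∧ Measure.map (shiftMap E) Λ = Λ ∧ entropyS Λ ≠ ⊤ ∧
          r = M.freeEnergy j0 xp Λ}

end MarkovSystem

end


variable {K : Type*} [MetricSpace K] [CompleteSpace K] [MeasurableSpace K] [BorelSpace K]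
  {N E : Type*} [Countable N] [Countable E]

/-!
Let `Λ` be an asymptotic state and let `I` be the set of codes whose coded point `F(σ)` lies in
`K_{t(σ_0)}`, and not merely in its closure. As `w_e` maps `K_{i(e)}` into `K_{t(e)}`, we have
`I ⊆ S⁻¹I` up to null sets, and equality follows since `Λ` is a finite invariant measure. Moreover
`I` is determined by the past, so the conditional probabilities of `Λ` are inherited by its
restrictions to `I` and `Iᶜ`. On `I` the extensions `p̄_e`, `w̄_e` agree with `p_e`, `w_e`, whence
the image of `Λ|_I` under `F` is fixed by `U*`. On `Iᶜ` we have `p̄_e = ∂p_e`, so that `Λ|_{Iᶜ}` is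
a multiple of an element of `E_⊥(M)`; this gives (i).

For (ii), the weights `∂p_e` of a state `Λ ∈ E_⊥(M)` sum to one along almost every code, and hence
`F ∈ Ω` almost surely. Then `R ≤ U` yields `F(Λ) ≤ U*F(Λ)`, with equality because both sides have
the same total mass.
-/

section ConditionalProbability

variable {Ω : Type*} {m m₀ : MeasurableSpace Ω} {μ : Measure Ω} {s : Set Ω} {f : Ω → ℝ≥0∞}

/-- `f` is a version of the conditional probability of the event `s` given the σ-algebra `m`.
Being stated through integrals, it makes sense for every measure `μ`, so that restricting or
rescaling `μ` requires no normalisation. -/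
structure IsCondProb (m : MeasurableSpace Ω) {m₀ : MeasurableSpace Ω} (μ : Measure Ω)
    (s : Set Ω) (f : Ω → ℝ≥0∞) : Prop where
  measurable : Measurable[m] f
  measure_inter ⦃A : Set Ω⦄ : MeasurableSet[m] A → μ (A ∩ s) = ∫⁻ ω in A, f ω ∂μ

theorem isCondProb_iff_condLExp_ae_eq [IsFiniteMeasure μ] (hm : m ≤ m₀) (hs : MeasurableSet s)
    (hf : Measurable[m] f) : IsCondProb m μ s f ↔ μ⁻[s.indicator 1 | m] =ᵐ[μ] f := by
  have hind (A : Set Ω) : ∫⁻ ω in A, s.indicator 1 ω ∂μ = μ (A ∩ s) := by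
    rw [lintegral_indicator_one hs, Measure.restrict_apply hs, Set.inter_comm]
  refine ⟨fun h => (ae_eq_condLExp hm μ _ hf fun A hA => ?_).symm, fun h => ⟨hf, fun A hA => ?_⟩⟩
  · rw [hind, h.measure_inter hA]
  · rw [← hind, ← setLIntegral_condLExp hm μ _ hA, lintegral_congr_ae (ae_restrict_of_ae h)]

theorem isCondProb_ofReal_iff_condExp_ae_eq [IsFiniteMeasure μ] (hm : m ≤ m₀)
    (hs : MeasurableSet s) {g : Ω → ℝ} (hg : Measurable[m] g) (hg₀ : ∀ ω, 0 ≤ g ω) :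
    IsCondProb m μ s (fun ω => ENNReal.ofReal (g ω)) ↔
      μ[s.indicator (fun _ => (1 : ℝ)) | m] =ᵐ[μ] g := by
  have hint : Integrable (s.indicator fun _ => (1 : ℝ)) μ := (integrable_const 1).indicator hs
  have hnonneg : 0 ≤ᵐ[μ] s.indicator fun _ => (1 : ℝ) :=
    .of_forall (Set.indicator_nonneg fun _ _ => zero_le_one)
  have hofReal : (fun ω => ENNReal.ofReal (s.indicator (fun _ => 1) ω)) = s.indicator 1 := by
    funext ω
    by_cases hω : ω ∈ s <;> simp [hω]
  have hcond := condLExp_ofReal m hint hnonneg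
  rw [hofReal] at hcond
  rw [isCondProb_iff_condLExp_ae_eq hm hs hg.ennreal_ofReal]
  refine eventually_congr ?_
  filter_upwards [hcond, condExp_nonneg hnonneg (m := m)] with ω h h₀
  rw [h, ENNReal.ofReal_eq_ofReal_iff h₀ (hg₀ ω)]

namespace IsCondProb

theorem congr {g : Ω → ℝ≥0∞} (h : IsCondProb m μ s f) (hg : Measurable[m] g) (hfg : f =ᵐ[μ] g) :
    IsCondProb m μ s g :=
  ⟨hg, fun A hA => by rw [h.measure_inter hA, lintegral_congr_ae (ae_restrict_of_ae hfg)]⟩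

theorem smul (h : IsCondProb m μ s f) (c : ℝ≥0∞) : IsCondProb m (c • μ) s f :=
  ⟨h.measurable, fun A hA => by
    rw [Measure.smul_apply, h.measure_inter hA, Measure.restrict_smul, lintegral_smul_measure]⟩

theorem restrict (h : IsCondProb m μ s f) (hm : m ≤ m₀) {A : Set Ω} (hA : MeasurableSet[m] A) :
    IsCondProb m (μ.restrict A) s f :=
  ⟨h.measurable, fun B hB => by
    rw [Measure.restrict_apply' (hm _ hA), Set.inter_right_comm, h.measure_inter (hB.inter hA),
      Measure.restrict_restrict (hm _ hB)]⟩

theorem setLIntegral_eq (h : IsCondProb m μ s f) (hm : m ≤ m₀) {g : Ω → ℝ≥0∞}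
    (hg : Measurable[m] g) : ∫⁻ ω in s, g ω ∂μ = ∫⁻ ω, f ω * g ω ∂μ := by
  have htrim : (μ.restrict s).trim hm = (μ.withDensity f).trim hm := by
    refine @Measure.ext _ m _ _ fun A hA => ?_
    rw [trim_measurableSet_eq hm hA, trim_measurableSet_eq hm hA, Measure.restrict_apply (hm _ hA),
      withDensity_apply _ (hm _ hA), h.measure_inter hA]
  calc ∫⁻ ω in s, g ω ∂μ = ∫⁻ ω, g ω ∂(μ.withDensity f) := by
        rw [← lintegral_trim hm hg, htrim, lintegral_trim hm hg]
    _ = ∫⁻ ω, f ω * g ω ∂μ :=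
        lintegral_withDensity_eq_lintegral_mul μ (h.measurable.mono hm le_rfl) (hg.mono hm le_rfl)

end IsCondProb

variable {ι : Type*} [Countable ι] {S : ι → Set Ω}

theorem lintegral_eq_tsum_setLIntegral (hS : ∀ i, MeasurableSet (S i))
    (hdisj : Pairwise (Function.onFun Disjoint S)) (hcover : ∀ᵐ ω ∂μ, ω ∈ ⋃ i, S i)
    (g : Ω → ℝ≥0∞) : ∫⁻ ω, g ω ∂μ = ∑' i, ∫⁻ ω in S i, g ω ∂μ := by
  rw [← lintegral_iUnion hS hdisj, Measure.restrict_eq_self_of_ae_mem hcover]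

theorem ae_tsum_eq_one_of_isCondProb [IsFiniteMeasure μ] (hm : m ≤ m₀)
    (hS : ∀ i, MeasurableSet (S i)) (hdisj : Pairwise (Function.onFun Disjoint S))
    (hcover : ∀ᵐ ω ∂μ, ω ∈ ⋃ i, S i) {F : ι → Ω → ℝ≥0∞}
    (hF : ∀ i, IsCondProb m μ (S i) (F i)) : ∀ᵐ ω ∂μ, ∑' i, F i ω = 1 := by
  have hmeas (i) : Measurable (F i) := (hF i).measurable.mono hm le_rfl
  have hsum : Measurable[m] fun ω => ∑' i, F i ω :=
    let _ := m
    .tsum fun i => (hF i).measurable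
  have hone : (fun ω => ∑' i, F i ω) =ᵐ[μ] μ⁻[fun _ => 1 | m] := by
    refine ae_eq_condLExp hm μ _ hsum fun A hA => ?_
    calc ∫⁻ ω in A, ∑' i, F i ω ∂μ = ∑' i, ∫⁻ ω in A, F i ω ∂μ :=
          lintegral_tsum fun i => (hmeas i).aemeasurable
      _ = ∑' i, μ.restrict A (S i) := by
          refine tsum_congr fun i => ?_
          rw [← (hF i).measure_inter hA, Measure.restrict_apply (hS i), Set.inter_comm]
      _ = ∫⁻ _ in A, 1 ∂μ := by
          rw [lintegral_eq_tsum_setLIntegral hS hdisj (ae_restrict_of_ae hcover)]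
          simp only [setLIntegral_one]
  rwa [condLExp_const hm] at hone

end ConditionalProbability

section CodeSpace

variable {E : Type*}

instance : DiscreteMeasurableSpace (Option E) := ⟨fun _ => trivial⟩

theorem measurable_shiftMap : Measurable (shiftMap E) :=
  measurable_pi_lambda _ fun k => measurable_pi_apply (k + 1)

theorem measurableSet_cylSetL (m : ℤ) (es : List (Option E)) : MeasurableSet (cylSetL m es) := by
  simp only [cylSetL, Set.ofPred_forall]
  exact .iInter fun k => .iInter fun _ =>
    measurable_pi_apply (m + (k : ℤ)) (measurableSet_singleton _)

theorem pastAlgebra_le : pastAlgebra E ≤ MeasurableSpace.pi := by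
  refine MeasurableSpace.generateFrom_le ?_
  rintro _ ⟨es, -, rfl⟩
  exact measurableSet_cylSetL _ es

theorem preimage_apply_neg_eq_iUnion_cylSetL (n : ℕ) (o : Option E) :
    (fun σ : CodeSpace E => σ (-(n : ℤ))) ⁻¹' {o} =
      ⋃ c : Fin n → Option E, cylSetL (-(n : ℤ)) (o :: List.ofFn c) := by
  ext σ
  simp only [Set.mem_preimage, Set.mem_singleton_iff, Set.mem_iUnion]
  refine ⟨fun h => ⟨fun k => σ (-(n : ℤ) + ((k : ℕ) + 1 : ℕ)), ?_⟩, ?_⟩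
  · rintro (_ | k) hk
    · simpa using h
    · simp
  · rintro ⟨c, hc⟩
    simpa using hc 0 (by simp)

variable [Countable E]

theorem measurable_pastAlgebra_apply {k : ℤ} (hk : k ≤ 0) :
    Measurable[pastAlgebra E] fun σ : CodeSpace E => σ k := by
  obtain ⟨n, rfl⟩ := Int.exists_eq_neg_ofNat hk
  let _ := pastAlgebra E
  refine measurable_to_countable' fun o => ?_
  rw [preimage_apply_neg_eq_iUnion_cylSetL]
  exact .iUnion fun c => MeasurableSpace.measurableSet_generateFrom
    ⟨o :: List.ofFn c, List.cons_ne_nil _ _, by simp⟩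

theorem stronglyMeasurable_pastAlgebra_of_dependsOn {X : Type*} [TopologicalSpace X]
    {f : CodeSpace E → X} {s : Set ℤ} (hs : s.Finite) (hs₀ : s ⊆ Set.Iic 0) (hf : DependsOn f s) :
    StronglyMeasurable[pastAlgebra E] f := by
  have : Nonempty X := ⟨f fun _ => none⟩
  have : Finite s := hs
  obtain ⟨g, rfl⟩ := dependsOn_iff_exists_comp.1 hf
  let _ := pastAlgebra E
  exact StronglyMeasurable.of_discrete.comp_measurable
    (measurable_pi_lambda _ fun k => measurable_pastAlgebra_apply (hs₀ k.2))

end CodeSpace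

namespace MarkovSystem

section Orbits

variable {K : Type*} [MetricSpace K] [MeasurableSpace K] {N E : Type*} (M : MarkovSystem K N E)
  (j0 : N) (xp : N → K)

theorem dependsOn_iterW (n : ℕ) :
    DependsOn (fun σ => M.iterW σ n) (Set.Icc (-(n : ℤ)) 0) := by
  induction n with
  | zero =>
    intro σ τ h
    funext y
    simp only [iterW, h 0 (by simp)]
  | succ n ih =>
    intro σ τ h
    funext y
    have hlast : σ (-(n + 1 : ℤ)) = τ (-(n + 1 : ℤ)) := h _ ⟨by simp, by omega⟩
    have hrest := ih fun k hk => h k ⟨by push_cast; linarith [hk.1], hk.2⟩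
    simp only [iterW, hlast, hrest]

theorem dependsOn_orbit (n : ℕ) :
    DependsOn (fun σ => M.orbit j0 xp σ n) (Set.Icc (-(n : ℤ)) 0) := by
  intro σ τ h
  simp only [orbit, M.dependsOn_iterW n h, h (-(n : ℤ)) ⟨le_rfl, by omega⟩]

theorem iterW_shiftMap (σ : CodeSpace E) (n : ℕ) (y : K) :
    M.iterW (shiftMap E σ) (n + 1) y = M.wext (σ 1) (M.iterW σ n y) := by
  induction n generalizing y with
  | zero => simp [iterW, shiftMap]
  | succ n ih =>
    have hlast : shiftMap E σ (-((n + 1 : ℕ) + 1 : ℤ)) = σ (-(n + 1 : ℤ)) := by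
      simp [shiftMap]
    rw [iterW, ih, iterW, hlast]

theorem orbit_shiftMap (σ : CodeSpace E) (n : ℕ) :
    M.orbit j0 xp (shiftMap E σ) (n + 1) = M.wext (σ 1) (M.orbit j0 xp σ n) := by
  have hlast : shiftMap E σ (-((n + 1 : ℕ) : ℤ)) = σ (-(n : ℤ)) := by simp [shiftMap]
  rw [orbit, iterW_shiftMap, hlast, orbit]

theorem stronglyMeasurable_orbit [Countable E] (n : ℕ) :
    StronglyMeasurable[pastAlgebra E] fun σ => M.orbit j0 xp σ n :=
  stronglyMeasurable_pastAlgebra_of_dependsOn (Set.finite_Icc _ _) Set.Icc_subset_Iic_self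
    (M.dependsOn_orbit j0 xp n)

variable {M j0 xp} {σ : CodeSpace E}

theorem shiftMap_mem_pathSpace (hσ : σ ∈ M.pathSpace) : shiftMap E σ ∈ M.pathSpace :=
  fun n => hσ (n + 1)

theorem iterW_mem_Kset (hσ : σ ∈ M.pathSpace) (n : ℕ) {y : K} {e₀ e : E}
    (h₀ : σ 0 = some e₀) (he : σ (-(n : ℤ)) = some e) (hy : y ∈ M.Kset (M.i e)) :
    M.iterW σ n y ∈ M.Kset (M.t e₀) := by
  induction n generalizing y e with
  | zero =>
    obtain rfl : e₀ = e := by simpa [h₀] using he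
    simpa only [iterW, h₀, wext, Option.elim_some] using M.w_mapsTo e₀ hy
  | succ n ih =>
    obtain ⟨a, b, ha, hb, hab⟩ := hσ (-((n + 1 : ℕ) : ℤ))
    obtain rfl : e = a := Option.some_inj.1 (he.symm.trans ha)
    rw [show -((n + 1 : ℕ) : ℤ) + 1 = -(n : ℤ) by push_cast; ring] at hb
    have hwy : M.w e y ∈ M.Kset (M.i b) := hab ▸ M.w_mapsTo e hy
    push_cast at he
    simpa only [iterW, he, wext, Option.elim_some] using ih hb hwy

theorem orbit_mem_Kset (hxp : ∀ j, xp j ∈ M.Kset j) (hσ : σ ∈ M.pathSpace) (n : ℕ)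
    {e₀ : E} (h₀ : σ 0 = some e₀) : M.orbit j0 xp σ n ∈ M.Kset (M.t e₀) := by
  obtain ⟨e, -, he, -, -⟩ := hσ (-(n : ℤ))
  refine iterW_mem_Kset hσ n h₀ he ?_
  simpa only [he, iext, Option.elim_some] using hxp (M.i e)

end Orbits

section Coding

variable {K : Type*} [MetricSpace K] [MeasurableSpace K] {N E : Type*} (M : MarkovSystem K N E)
  (j0 : N) (xp : N → K)

/-- The limit of the backward orbit. It agrees with the coding map on its domain `D`, but is
determined everywhere by the coordinates `σ_k`, `k ≤ 0`, whereas `D` constrains the future too. -/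
noncomputable def pastCode (σ : CodeSpace E) : K :=
  haveI : Nonempty K := ⟨xp j0⟩
  limUnder atTop (M.orbit j0 xp σ)

/-- The set `{σ | t(σ_0) = j}`: the counterpart of `T_j` that only constrains the past. -/
def terminalSet (j : N) : Set (CodeSpace E) := {σ | ∃ e : E, σ 0 = some e ∧ M.t e = j}

/-- The set of codes whose past limit lies in the partition set `K_{t(σ_0)}` itself, and not
merely in its closure. -/
def interiorSet : Set (CodeSpace E) :=
  {σ | ∃ e : E, σ 0 = some e ∧ M.pastCode j0 xp σ ∈ M.Kset (M.t e)}

variable {M j0 xp} {σ : CodeSpace E}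

theorem tendsto_orbit_pastCode (hσ : σ ∈ M.codeDomain j0 xp) :
    Tendsto (M.orbit j0 xp σ) atTop (𝓝 (M.pastCode j0 xp σ)) :=
  tendsto_nhds_limUnder hσ.2

theorem code_eq_pastCode (hσ : σ ∈ M.codeDomain j0 xp) : M.code j0 xp σ = M.pastCode j0 xp σ := by
  rw [code, dif_pos hσ]
  exact tendsto_nhds_unique hσ.2.choose_spec (tendsto_orbit_pastCode hσ)

theorem mem_Tset_iff (hσ : σ ∈ M.pathSpace) {j : N} : σ ∈ M.Tset j ↔ σ ∈ M.terminalSet j :=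
  and_iff_right hσ

theorem exists_apply_one_eq_some (hσ : σ ∈ M.pathSpace) :
    ∃ e, σ 1 = some e ∧ σ ∈ M.terminalSet (M.i e) := by
  obtain ⟨e₀, e, h₀, h₁, h⟩ := hσ 0
  exact ⟨e, h₁, e₀, h₀, h.symm⟩

theorem mem_terminalSet_i (hσ : σ ∈ M.pathSpace) {e : E} (he : σ 1 = some e) :
    σ ∈ M.terminalSet (M.i e) := by
  obtain ⟨e', he', hT⟩ := exists_apply_one_eq_some hσ
  rwa [Option.some_inj.1 (he.symm.trans he')]

theorem mem_interiorSet_iff {j : N} (hj : σ ∈ M.terminalSet j) :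
    σ ∈ M.interiorSet j0 xp ↔ M.pastCode j0 xp σ ∈ M.Kset j := by
  obtain ⟨e, he, rfl⟩ := hj
  simp [interiorSet, he]

section ShiftEquivariance

variable (hxp : ∀ j, xp j ∈ M.Kset j)
include hxp

theorem pastCode_mem_closure (hσ : σ ∈ M.codeDomain j0 xp) {j : N} (hj : σ ∈ M.terminalSet j) :
    M.pastCode j0 xp σ ∈ closure (M.Kset j) := by
  obtain ⟨e, he, rfl⟩ := hj
  exact mem_closure_of_tendsto (tendsto_orbit_pastCode hσ)
    (.of_forall fun n => orbit_mem_Kset hxp hσ.1 n he)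

variable {wb : E → K → K} (hwb : M.IsUCExtensionW wb)
include hwb

theorem tendsto_orbit_shiftMap (hσ : σ ∈ M.codeDomain j0 xp) {e : E} (he : σ 1 = some e) :
    Tendsto (M.orbit j0 xp (shiftMap E σ)) atTop (𝓝 (wb e (M.pastCode j0 xp σ))) := by
  have hT := mem_terminalSet_i hσ.1 he
  have hmem (n : ℕ) : M.orbit j0 xp σ n ∈ M.Kset (M.i e) := by
    obtain ⟨e₀, h₀, h⟩ := hT
    exact h ▸ orbit_mem_Kset hxp hσ.1 n h₀
  have hlim : Tendsto (fun n => wb e (M.orbit j0 xp σ n)) atTop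
      (𝓝 (wb e (M.pastCode j0 xp σ))) :=
    ((hwb e).1 _ (pastCode_mem_closure hxp hσ hT)).tendsto.comp <|
      tendsto_nhdsWithin_iff.2
        ⟨tendsto_orbit_pastCode hσ, .of_forall fun n => subset_closure (hmem n)⟩
  rw [← tendsto_add_atTop_iff_nat 1]
  refine hlim.congr fun n => ?_
  rw [orbit_shiftMap, he, (hwb e).2 _ (hmem n), wext, Option.elim_some]

theorem shiftMap_mem_codeDomain (hσ : σ ∈ M.codeDomain j0 xp) :
    shiftMap E σ ∈ M.codeDomain j0 xp := by
  obtain ⟨e, he, -⟩ := exists_apply_one_eq_some hσ.1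
  exact ⟨shiftMap_mem_pathSpace hσ.1, _, tendsto_orbit_shiftMap hxp hwb hσ he⟩

theorem pastCode_shiftMap (hσ : σ ∈ M.codeDomain j0 xp) {e : E} (he : σ 1 = some e) :
    M.pastCode j0 xp (shiftMap E σ) = wb e (M.pastCode j0 xp σ) :=
  tendsto_nhds_unique (tendsto_orbit_pastCode (shiftMap_mem_codeDomain hxp hwb hσ))
    (tendsto_orbit_shiftMap hxp hwb hσ he)

theorem shiftMap_mem_interiorSet (hσ : σ ∈ M.codeDomain j0 xp)
    (h : σ ∈ M.interiorSet j0 xp) : shiftMap E σ ∈ M.interiorSet j0 xp := by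
  obtain ⟨e, he, hT⟩ := exists_apply_one_eq_some hσ.1
  have hK : M.pastCode j0 xp σ ∈ M.Kset (M.i e) := (mem_interiorSet_iff hT).1 h
  refine ⟨e, he, ?_⟩
  rw [pastCode_shiftMap hxp hwb hσ he, (hwb e).2 _ hK]
  exact M.w_mapsTo e hK

end ShiftEquivariance

section Measurability

variable [Countable E] (M j0 xp)

theorem measurableSet_terminalSet (j : N) : MeasurableSet[pastAlgebra E] (M.terminalSet j) :=
  measurable_pastAlgebra_apply (E := E) le_rfl
    (MeasurableSet.of_discrete (s := {o | ∃ e : E, o = some e ∧ M.t e = j}))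

theorem measurableSet_pathSpace : MeasurableSet M.pathSpace := by
  have hpair (n : ℤ) : Measurable fun σ : CodeSpace E => (σ n, σ (n + 1)) :=
    (measurable_pi_apply n).prodMk (measurable_pi_apply (n + 1))
  simp only [pathSpace, Set.ofPred_forall]
  exact .iInter fun n => hpair n (MeasurableSet.of_discrete (s := {o : Option E × Option E |
    ∃ e e', o.1 = some e ∧ o.2 = some e' ∧ M.i e' = M.t e}))

variable [CompleteSpace K]

theorem measurableSet_codeDomain : MeasurableSet (M.codeDomain j0 xp) :=
  M.measurableSet_pathSpace.inter <| StronglyMeasurable.measurableSet_exists_tendsto fun n =>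
    (M.stronglyMeasurable_orbit j0 xp n).mono pastAlgebra_le

variable [BorelSpace K]

theorem measurable_pastAlgebra_pastCode : Measurable[pastAlgebra E] (M.pastCode j0 xp) :=
  have : Nonempty K := ⟨xp j0⟩
  let _ := pastAlgebra E
  (StronglyMeasurable.limUnder (M.stronglyMeasurable_orbit j0 xp)).measurable

theorem measurable_pastCode : Measurable (M.pastCode j0 xp) :=
  (M.measurable_pastAlgebra_pastCode j0 xp).mono pastAlgebra_le le_rfl

theorem measurableSet_interiorSet : MeasurableSet[pastAlgebra E] (M.interiorSet j0 xp) := by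
  let _ := pastAlgebra E
  simp only [interiorSet, Set.ofPred_exists, Set.ofPred_and]
  exact .iUnion fun e => .inter
    (measurable_pastAlgebra_apply (E := E) le_rfl (measurableSet_singleton (some e)))
    (M.measurable_pastAlgebra_pastCode j0 xp (M.Kset_measurable (M.t e)))

end Measurability

end Coding

section MarkovOperator

variable {K : Type*} [MetricSpace K] [MeasurableSpace K] {N E : Type*} (M : MarkovSystem K N E)

theorem eq_of_mem_Kset {x : K} {j j' : N} (hj : x ∈ M.Kset j) (hj' : x ∈ M.Kset j') : j = j' :=
  M.Kset_disjoint.eq (Set.not_disjoint_iff.2 ⟨x, hj, hj'⟩)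

theorem tsum_ofReal_p (x : K) : ∑' e, ENNReal.ofReal (M.p e x) = 1 := by
  obtain ⟨j, hj⟩ := Set.mem_iUnion.1 (M.Kset_cover.symm ▸ Set.mem_univ x)
  have hsummable : Summable fun e : {e // M.i e = j} => M.p e.val x :=
    by_contra fun h =>
      zero_ne_one ((tsum_eq_zero_of_not_summable h).symm.trans (M.p_tsum_one j x hj))
  have hsupport : Function.support (fun e => ENNReal.ofReal (M.p e x)) ⊆ {e | M.i e = j} := by
    intro e he
    by_contra hne
    have hx : x ∉ M.Kset (M.i e) := fun hx => hne (M.eq_of_mem_Kset hx hj)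
    exact he (by simp only [M.p_zero_outside e x hx, ENNReal.ofReal_zero])
  calc ∑' e, ENNReal.ofReal (M.p e x)
      = ∑' e : {e // M.i e = j}, ENNReal.ofReal (M.p e.val x) :=
        (tsum_subtype_eq_of_support_subset hsupport).symm
    _ = 1 := by
        rw [← ENNReal.ofReal_tsum_of_nonneg (fun e => M.p_nonneg _ _) hsummable,
          M.p_tsum_one j x hj, ENNReal.ofReal_one]

variable [Countable E] {f : K → ℝ≥0∞} (hf : Measurable f)

include hf in
theorem measurable_markovOp : Measurable (M.markovOp f) :=
  .tsum fun e => (M.p_measurable e).ennreal_ofReal.mul (hf.comp (M.w_measurable e))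

include hf in
theorem lintegral_adjOp (ν : Measure K) : ∫⁻ x, f x ∂(M.adjOp ν) = ∫⁻ x, M.markovOp f x ∂ν := by
  have hp (e : E) : Measurable fun x => ENNReal.ofReal (M.p e x) :=
    (M.p_measurable e).ennreal_ofReal
  have hfw (e : E) : Measurable fun x => f (M.w e x) := hf.comp (M.w_measurable e)
  calc ∫⁻ x, f x ∂(M.adjOp ν)
      = ∑' e, ∫⁻ x, f (M.w e x) ∂(ν.withDensity fun x => ENNReal.ofReal (M.p e x)) := by
        simp only [adjOp, lintegral_sum_measure, lintegral_map hf (M.w_measurable _)]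
    _ = ∑' e, ∫⁻ x, ENNReal.ofReal (M.p e x) * f (M.w e x) ∂ν :=
        tsum_congr fun e => lintegral_withDensity_eq_lintegral_mul ν (hp e) (hfw e)
    _ = ∫⁻ x, M.markovOp f x ∂ν := (lintegral_tsum fun e => ((hp e).mul (hfw e)).aemeasurable).symm

theorem adjOp_add (ν₁ ν₂ : Measure K) : M.adjOp (ν₁ + ν₂) = M.adjOp ν₁ + M.adjOp ν₂ :=
  Measure.ext_of_lintegral _ fun f hf => by
    simp only [lintegral_add_measure, M.lintegral_adjOp hf]

theorem adjOp_smul (c : ℝ≥0∞) (ν : Measure K) : M.adjOp (c • ν) = c • M.adjOp ν :=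
  Measure.ext_of_lintegral _ fun f hf => by
    simp only [lintegral_smul_measure, M.lintegral_adjOp hf]

theorem adjOp_univ (ν : Measure K) : M.adjOp ν Set.univ = ν Set.univ := by
  rw [← lintegral_one, M.lintegral_adjOp measurable_const, ← lintegral_one]
  simp only [markovOp, mul_one, tsum_ofReal_p]

end MarkovOperator

section ContinuousExtensions

variable {K : Type*} [MetricSpace K] [MeasurableSpace K] {N E : Type*} {M : MarkovSystem K N E}
  {pbar : E → K → ℝ} {wb : E → K → K}

theorem IsUCExtensionP.nonneg (h : M.IsUCExtensionP pbar) (e : E) (x : K) : 0 ≤ pbar e x := by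
  by_cases hx : x ∈ closure (M.Kset (M.i e))
  · have hnonneg : ∀ y ∈ M.Kset (M.i e), pbar e y ∈ Set.Ici 0 := fun y hy =>
      (h e).2.1 y hy ▸ M.p_nonneg e y
    exact closure_minimal (Set.mapsTo_iff_image_subset.1 hnonneg) isClosed_Ici
      ((h e).1.image_closure (Set.mem_image_of_mem _ hx))
  · exact ((h e).2.2 x hx).ge

theorem IsUCExtensionP.dp_nonneg (h : M.IsUCExtensionP pbar) (e : E) (x : K) :
    0 ≤ M.dp pbar e x :=
  Set.indicator_nonneg (fun x _ => h.nonneg e x) x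

variable [BorelSpace K]

theorem IsUCExtensionP.measurable (h : M.IsUCExtensionP pbar) (e : E) : Measurable (pbar e) := by
  have hindicator : (closure (M.Kset (M.i e))).indicator (pbar e) = pbar e :=
    Set.indicator_eq_self.2 fun x hx => by_contra fun hx' => hx ((h e).2.2 x hx')
  rw [← hindicator, ← Set.piecewise_eq_indicator]
  exact (h e).1.measurable_piecewise continuousOn_const isClosed_closure.measurableSet

theorem IsUCExtensionP.measurable_dp (h : M.IsUCExtensionP pbar) (e : E) :
    Measurable (M.dp pbar e) :=
  (h.measurable e).indicator (isClosed_closure.measurableSet.diff (M.Kset_measurable _))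

-- Off the closure of `K_{i(e)}` the map `wb e` is arbitrary, so it need not be measurable there.
theorem IsUCExtensionW.exists_measurable (h : M.IsUCExtensionW wb) :
    ∃ wm : E → K → K, M.IsUCExtensionW wm ∧ (∀ e, Measurable (wm e)) ∧
      ∀ pbar, M.Rop pbar wm = M.Rop pbar wb := by
  obtain hK | ⟨⟨x₀⟩⟩ := isEmpty_or_nonempty K
  · exact ⟨wb, h, fun e => measurable_of_empty _, fun _ => rfl⟩
  let wm (e : E) : K → K := (closure (M.Kset (M.i e))).piecewise (wb e) fun _ => x₀
  have hwm (e : E) : Set.EqOn (wm e) (wb e) (closure (M.Kset (M.i e))) :=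
    Set.piecewise_eqOn _ _ _
  refine ⟨wm, fun e => ⟨(h e).1.congr (hwm e), fun x hx => ?_⟩,
    fun e => (h e).1.measurable_piecewise continuousOn_const isClosed_closure.measurableSet,
    fun pbar => ?_⟩
  · rw [hwm e (subset_closure hx), (h e).2 x hx]
  · funext f x
    refine tsum_congr fun e => ?_
    by_cases hx : x ∈ closure (M.Kset (M.i e))
    · rw [hwm e hx]
    · have hdp : M.dp pbar e x = 0 := Set.indicator_of_notMem (fun hx' => hx hx'.1) _
      simp only [hdp, ENNReal.ofReal_zero, zero_mul]

theorem measurable_iterate_Rop [Countable E] (hpbar : M.IsUCExtensionP pbar)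
    (hw : ∀ e, Measurable (wb e)) (n : ℕ) : Measurable ((M.Rop pbar wb)^[n] fun _ => 1) := by
  induction n with
  | zero => exact measurable_const
  | succ n ih =>
    rw [Function.iterate_succ_apply']
    exact .tsum fun e => (hpbar.measurable_dp e).ennreal_ofReal.mul (ih.comp (hw e))

end ContinuousExtensions

section States

variable {K : Type*} [MetricSpace K] [MeasurableSpace K] {N E : Type*} (M : MarkovSystem K N E)
  (j0 : N) (xp : N → K) (q : E → K → ℝ)

/-- The weight `(q_e ∘ F)·1_{T_{i(e)}}` with which the next coordinate is `e` given the past;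
it is written with `pastCode` and `terminalSet` so as to be measurable for the past algebra. -/
noncomputable def transProb (e : E) : CodeSpace E → ℝ≥0∞ :=
  (M.terminalSet (M.i e)).indicator fun σ => ENNReal.ofReal (q e (M.pastCode j0 xp σ))

/-- A finite shift-invariant measure, carried by `D`, whose conditional probabilities of the next
coordinate are the weights `transProb`. Up to normalisation these are the elements of `Ẽ(M)` for
`q = p̄` and those of `E_⊥(M)` for `q = ∂p`; leaving the mass free makes the notion stable under
restriction to invariant sets. -/
structure IsState (Λ : Measure (CodeSpace E)) : Prop where
  isFiniteMeasure : IsFiniteMeasure Λ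
  measurePreserving : MeasurePreserving (shiftMap E) Λ Λ
  ae_mem_codeDomain : ∀ᵐ σ ∂Λ, σ ∈ M.codeDomain j0 xp
  isCondProb (e : E) : IsCondProb (pastAlgebra E) Λ {σ | σ 1 = some e} (M.transProb j0 xp q e)

variable {M j0 xp q} {σ : CodeSpace E} {Λ : Measure (CodeSpace E)}

theorem transProb_le (e : E) :
    M.transProb j0 xp q e σ ≤ ENNReal.ofReal (q e (M.pastCode j0 xp σ)) :=
  Set.indicator_le_self _ _ σ

theorem measurableSet_apply_one_eq (e : E) : MeasurableSet {σ : CodeSpace E | σ 1 = some e} :=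
  have happly : Measurable fun σ : CodeSpace E => σ 1 := measurable_pi_apply 1
  happly (measurableSet_singleton (some e))

theorem pairwise_disjoint_apply_one_eq :
    Pairwise (Function.onFun Disjoint fun e : E => {σ : CodeSpace E | σ 1 = some e}) :=
  fun _ _ hne => Set.disjoint_left.2 fun _ h h' => hne (Option.some_inj.1 (h.symm.trans h'))

theorem map_code_eq_map_pastCode (h : ∀ᵐ σ ∂Λ, σ ∈ M.codeDomain j0 xp) :
    Measure.map (M.code j0 xp) Λ = Measure.map (M.pastCode j0 xp) Λ :=
  Measure.map_congr (h.mono fun _ hσ => code_eq_pastCode hσ)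

namespace IsState

theorem ae_mem_iUnion_apply_one_eq (h : M.IsState j0 xp q Λ) :
    ∀ᵐ σ ∂Λ, σ ∈ ⋃ e : E, {σ : CodeSpace E | σ 1 = some e} := by
  filter_upwards [h.ae_mem_codeDomain] with σ hσ
  obtain ⟨e, he, -⟩ := exists_apply_one_eq_some hσ.1
  exact Set.mem_iUnion.2 ⟨e, he⟩

theorem ae_tsum_transProb_eq_one [Countable E] (h : M.IsState j0 xp q Λ) :
    ∀ᵐ σ ∂Λ, ∑' e, M.transProb j0 xp q e σ = 1 :=
  have := h.isFiniteMeasure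
  ae_tsum_eq_one_of_isCondProb pastAlgebra_le measurableSet_apply_one_eq
    pairwise_disjoint_apply_one_eq h.ae_mem_iUnion_apply_one_eq h.isCondProb

theorem smul (h : M.IsState j0 xp q Λ) {c : ℝ≥0∞} (hc : c ≠ ⊤) : M.IsState j0 xp q (c • Λ) where
  isFiniteMeasure := have := h.isFiniteMeasure; Λ.smul_finite hc
  measurePreserving := h.measurePreserving.smul_measure c
  ae_mem_codeDomain := Measure.ae_smul_measure h.ae_mem_codeDomain c
  isCondProb e := (h.isCondProb e).smul c

theorem restrict (h : M.IsState j0 xp q Λ) {A : Set (CodeSpace E)}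
    (hA : MeasurableSet[pastAlgebra E] A) (hinv : shiftMap E ⁻¹' A =ᵐ[Λ] A) :
    M.IsState j0 xp q (Λ.restrict A) where
  isFiniteMeasure := have := h.isFiniteMeasure; inferInstance
  measurePreserving := by
    have := h.measurePreserving.restrict_preimage (pastAlgebra_le _ hA)
    rwa [Measure.restrict_congr_set hinv] at this
  ae_mem_codeDomain := ae_restrict_of_ae h.ae_mem_codeDomain
  isCondProb e := (h.isCondProb e).restrict pastAlgebra_le hA

end IsState

variable [CompleteSpace K] [BorelSpace K] [Countable E]

theorem measurable_transProb (hq : ∀ e, Measurable (q e)) (e : E) :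
    Measurable[pastAlgebra E] (M.transProb j0 xp q e) :=
  ((hq e).comp (M.measurable_pastAlgebra_pastCode j0 xp)).ennreal_ofReal.indicator
    (M.measurableSet_terminalSet (M.i e))

theorem IsState.congr {q' : E → K → ℝ} (h : M.IsState j0 xp q Λ) (hq' : ∀ e, Measurable (q' e))
    (hqq' : ∀ e, M.transProb j0 xp q e =ᵐ[Λ] M.transProb j0 xp q' e) : M.IsState j0 xp q' Λ where
  isFiniteMeasure := h.isFiniteMeasure
  measurePreserving := h.measurePreserving
  ae_mem_codeDomain := h.ae_mem_codeDomain
  isCondProb e := (h.isCondProb e).congr (measurable_transProb hq' e) (hqq' e)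

theorem isCondProb_transProb_iff [IsFiniteMeasure Λ] (hq : ∀ e, Measurable (q e))
    (hq₀ : ∀ e x, 0 ≤ q e x) (hD : ∀ᵐ σ ∂Λ, σ ∈ M.codeDomain j0 xp) (e : E) :
    IsCondProb (pastAlgebra E) Λ {σ | σ 1 = some e} (M.transProb j0 xp q e) ↔
      Λ[Set.indicator {σ : CodeSpace E | σ 1 = some e} (fun _ => (1 : ℝ)) | pastAlgebra E]
        =ᵐ[Λ] Set.indicator (M.Tset (M.i e)) (fun σ => q e (M.code j0 xp σ)) := by
  set g : CodeSpace E → ℝ :=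
    (M.terminalSet (M.i e)).indicator fun σ => q e (M.pastCode j0 xp σ) with hg
  have hgm : Measurable[pastAlgebra E] g :=
    ((hq e).comp (M.measurable_pastAlgebra_pastCode j0 xp)).indicator
      (M.measurableSet_terminalSet (M.i e))
  have hg₀ (σ) : 0 ≤ g σ := Set.indicator_nonneg (fun _ _ => hq₀ e _) σ
  have htrans : M.transProb j0 xp q e = fun σ => ENNReal.ofReal (g σ) :=
    Set.indicator_comp_of_zero ENNReal.ofReal_zero
  have hcode : g =ᵐ[Λ] Set.indicator (M.Tset (M.i e)) (fun σ => q e (M.code j0 xp σ)) := by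
    filter_upwards [hD] with σ hσ
    simp only [hg, Set.indicator_apply, mem_Tset_iff hσ.1, code_eq_pastCode hσ]
  rw [htrans, isCondProb_ofReal_iff_condExp_ae_eq pastAlgebra_le (measurableSet_apply_one_eq e)
    hgm hg₀]
  exact ⟨fun h => h.trans hcode, fun h => h.trans hcode.symm⟩

theorem isAsymptotic_iff (hq : ∀ e, Measurable (q e)) (hq₀ : ∀ e x, 0 ≤ q e x) :
    M.IsAsymptotic j0 xp q Λ ↔ IsProbabilityMeasure Λ ∧ M.IsState j0 xp q Λ := by
  have hae [IsProbabilityMeasure Λ] :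
      (∀ᵐ σ ∂Λ, σ ∈ M.codeDomain j0 xp) ↔ Λ (M.codeDomain j0 xp) = 1 :=
    mem_ae_iff_prob_eq_one (M.measurableSet_codeDomain j0 xp)
  constructor
  · rintro ⟨hΛ, hshift, hD, hcond⟩
    exact ⟨hΛ, inferInstance, ⟨measurable_shiftMap, hshift⟩, hae.2 hD,
      fun e => (isCondProb_transProb_iff hq hq₀ (hae.2 hD) e).2 (hcond e)⟩
  · rintro ⟨hΛ, -, hshift, hD, hcond⟩
    exact ⟨hΛ, hshift.map_eq, hae.1 hD,
      fun e => (isCondProb_transProb_iff hq hq₀ hD e).1 (hcond e)⟩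

theorem isInvariantMeasure_map_code_iff [IsProbabilityMeasure Λ] (h : M.IsState j0 xp q Λ) :
    M.IsInvariantMeasure (Measure.map (M.code j0 xp) Λ) ↔
      M.adjOp (Measure.map (M.pastCode j0 xp) Λ) = Measure.map (M.pastCode j0 xp) Λ := by
  rw [map_code_eq_map_pastCode h.ae_mem_codeDomain, IsInvariantMeasure]
  exact and_iff_right
    (Measure.isProbabilityMeasure_map (M.measurable_pastCode j0 xp).aemeasurable)

theorem forall_isAsymptotic_isInvariantMeasure_iff (hq : ∀ e, Measurable (q e))
    (hq₀ : ∀ e x, 0 ≤ q e x) :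
    (∀ Λ, M.IsAsymptotic j0 xp q Λ → M.IsInvariantMeasure (Measure.map (M.code j0 xp) Λ)) ↔
      ∀ Λ, M.IsState j0 xp q Λ →
        M.adjOp (Measure.map (M.pastCode j0 xp) Λ) = Measure.map (M.pastCode j0 xp) Λ := by
  refine ⟨fun H Λ h => ?_, fun H Λ hΛ => ?_⟩
  · have := h.isFiniteMeasure
    obtain rfl | hne := eq_zero_or_neZero Λ
    · simpa using M.adjOp_smul 0 0
    set c := Λ Set.univ
    have hc : c ≠ ⊤ := measure_ne_top Λ _
    have hc₀ : c ≠ 0 := NeZero.ne _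
    have hnorm : M.IsState j0 xp q (c⁻¹ • Λ) := h.smul (ENNReal.inv_ne_top.2 hc₀)
    have hinv := (isInvariantMeasure_map_code_iff hnorm).1
      (H _ ((isAsymptotic_iff hq hq₀).2 ⟨inferInstance, hnorm⟩))
    have hΛ : Λ = c • c⁻¹ • Λ := by rw [smul_smul, ENNReal.mul_inv_cancel hc₀ hc, one_smul]
    rw [hΛ, Measure.map_smul, adjOp_smul, hinv]
  · obtain ⟨hprob, h⟩ := (isAsymptotic_iff hq hq₀).1 hΛ
    exact (isInvariantMeasure_map_code_iff h).2 (H Λ h)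

end States

section Decomposition

variable {K : Type*} [MetricSpace K] [MeasurableSpace K] {N E : Type*} {M : MarkovSystem K N E}
  {j0 : N} {xp : N → K} {q pbar : E → K → ℝ} {wb : E → K → K} {σ : CodeSpace E}
  {Λ : Measure (CodeSpace E)}

theorem transProb_dp_eq_zero (h : σ ∈ M.interiorSet j0 xp) (e : E) :
    M.transProb j0 xp (M.dp pbar) e σ = 0 := by
  refine Set.indicator_apply_eq_zero.2 fun hT => ?_
  rw [dp, Set.indicator_of_notMem fun hx => hx.2 ((mem_interiorSet_iff hT).1 h),
    ENNReal.ofReal_zero]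

theorem transProb_dp_eq (hxp : ∀ j, xp j ∈ M.Kset j) (hσ : σ ∈ M.codeDomain j0 xp)
    (h : σ ∉ M.interiorSet j0 xp) (e : E) :
    M.transProb j0 xp (M.dp pbar) e σ = M.transProb j0 xp pbar e σ := by
  by_cases hT : σ ∈ M.terminalSet (M.i e)
  · have hboundary : M.pastCode j0 xp σ ∈ closure (M.Kset (M.i e)) \ M.Kset (M.i e) :=
      ⟨pastCode_mem_closure hxp hσ hT, mt (mem_interiorSet_iff hT).2 h⟩
    rw [transProb, transProb, Set.indicator_of_mem hT, Set.indicator_of_mem hT, dp,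
      Set.indicator_of_mem hboundary]
  · rw [transProb, transProb, Set.indicator_of_notMem hT, Set.indicator_of_notMem hT]

theorem transProb_mul_eq (hpbar : M.IsUCExtensionP pbar) (hwb : M.IsUCExtensionW wb)
    (h : σ ∈ M.interiorSet j0 xp) (e : E) (f : K → ℝ≥0∞) :
    M.transProb j0 xp pbar e σ * f (wb e (M.pastCode j0 xp σ)) =
      ENNReal.ofReal (M.p e (M.pastCode j0 xp σ)) * f (M.w e (M.pastCode j0 xp σ)) := by
  by_cases hT : σ ∈ M.terminalSet (M.i e)
  · have hK := (mem_interiorSet_iff hT).1 h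
    rw [transProb, Set.indicator_of_mem hT, (hpbar e).2.1 _ hK, (hwb e).2 _ hK]
  · obtain ⟨e₀, h₀, hK₀⟩ := h
    have hK : M.pastCode j0 xp σ ∉ M.Kset (M.i e) := fun hK =>
      hT ⟨e₀, h₀, M.eq_of_mem_Kset hK₀ hK⟩
    rw [transProb, Set.indicator_of_notMem hT, M.p_zero_outside e _ hK, ENNReal.ofReal_zero,
      zero_mul, zero_mul]

namespace IsState

variable [Countable E]

theorem ae_notMem_interiorSet (h : M.IsState j0 xp (M.dp pbar) Λ) :
    ∀ᵐ σ ∂Λ, σ ∉ M.interiorSet j0 xp := by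
  filter_upwards [h.ae_tsum_transProb_eq_one] with σ hσ hI
  simp only [transProb_dp_eq_zero hI, tsum_zero, zero_ne_one] at hσ

variable [CompleteSpace K] [BorelSpace K]

theorem preimage_interiorSet_ae_eq (h : M.IsState j0 xp q Λ) (hxp : ∀ j, xp j ∈ M.Kset j)
    (hwb : M.IsUCExtensionW wb) :
    shiftMap E ⁻¹' M.interiorSet j0 xp =ᵐ[Λ] M.interiorSet j0 xp := by
  have := h.isFiniteMeasure
  have hI : NullMeasurableSet (M.interiorSet j0 xp) Λ :=
    (pastAlgebra_le _ (M.measurableSet_interiorSet j0 xp)).nullMeasurableSet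
  have hsub : M.interiorSet j0 xp ≤ᵐ[Λ] shiftMap E ⁻¹' M.interiorSet j0 xp := by
    filter_upwards [h.ae_mem_codeDomain] with σ hσ using shiftMap_mem_interiorSet hxp hwb hσ
  exact (ae_eq_of_ae_subset_of_measure_ge hsub
    (h.measurePreserving.measure_preimage hI).le hI (measure_ne_top _ _)).symm

theorem of_dp (h : M.IsState j0 xp (M.dp pbar) Λ) (hpbar : M.IsUCExtensionP pbar)
    (hxp : ∀ j, xp j ∈ M.Kset j) : M.IsState j0 xp pbar Λ := by
  refine h.congr hpbar.measurable fun e => ?_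
  filter_upwards [h.ae_mem_codeDomain, h.ae_notMem_interiorSet] with σ hσ hI
  exact transProb_dp_eq hxp hσ hI e

theorem restrict_compl_interiorSet (h : M.IsState j0 xp pbar Λ) (hpbar : M.IsUCExtensionP pbar)
    (hxp : ∀ j, xp j ∈ M.Kset j) (hwb : M.IsUCExtensionW wb) :
    M.IsState j0 xp (M.dp pbar) (Λ.restrict (M.interiorSet j0 xp)ᶜ) := by
  have hI := M.measurableSet_interiorSet j0 xp
  have hrestrict := h.restrict hI.compl (h.preimage_interiorSet_ae_eq hxp hwb).compl
  refine hrestrict.congr hpbar.measurable_dp fun e => ?_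
  filter_upwards [hrestrict.ae_mem_codeDomain, ae_restrict_mem (pastAlgebra_le _ hI).compl]
    with σ hσ hσI
  exact (transProb_dp_eq hxp hσ hσI e).symm

theorem lintegral_pastCode (h : M.IsState j0 xp q Λ) (hxp : ∀ j, xp j ∈ M.Kset j)
    (hwb : M.IsUCExtensionW wb) (hw : ∀ e, Measurable (wb e)) {f : K → ℝ≥0∞} (hf : Measurable f) :
    ∫⁻ σ, f (M.pastCode j0 xp σ) ∂Λ =
      ∫⁻ σ, ∑' e, M.transProb j0 xp q e σ * f (wb e (M.pastCode j0 xp σ)) ∂Λ := by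
  have hF := M.measurable_pastAlgebra_pastCode j0 xp
  have hfw (e : E) : Measurable[pastAlgebra E] fun σ => f (wb e (M.pastCode j0 xp σ)) :=
    hf.comp ((hw e).comp hF)
  calc ∫⁻ σ, f (M.pastCode j0 xp σ) ∂Λ
      = ∫⁻ σ, f (M.pastCode j0 xp (shiftMap E σ)) ∂Λ :=
        (h.measurePreserving.lintegral_comp (hf.comp (M.measurable_pastCode j0 xp))).symm
    _ = ∑' e, ∫⁻ σ in {σ | σ 1 = some e}, f (M.pastCode j0 xp (shiftMap E σ)) ∂Λ :=
        lintegral_eq_tsum_setLIntegral measurableSet_apply_one_eq pairwise_disjoint_apply_one_eq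
          h.ae_mem_iUnion_apply_one_eq _
    _ = ∑' e, ∫⁻ σ in {σ | σ 1 = some e}, f (wb e (M.pastCode j0 xp σ)) ∂Λ := by
        refine tsum_congr fun e => setLIntegral_congr_fun_ae (measurableSet_apply_one_eq e) ?_
        filter_upwards [h.ae_mem_codeDomain] with σ hσ he
        rw [pastCode_shiftMap hxp hwb hσ he]
    _ = ∑' e, ∫⁻ σ, M.transProb j0 xp q e σ * f (wb e (M.pastCode j0 xp σ)) ∂Λ :=
        tsum_congr fun e => (h.isCondProb e).setLIntegral_eq pastAlgebra_le (hfw e)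
    _ = ∫⁻ σ, ∑' e, M.transProb j0 xp q e σ * f (wb e (M.pastCode j0 xp σ)) ∂Λ :=
        (lintegral_tsum fun e => (((h.isCondProb e).measurable.mono pastAlgebra_le le_rfl).mul
          ((hfw e).mono pastAlgebra_le le_rfl)).aemeasurable).symm

theorem adjOp_map_pastCode_of_ae_mem_interiorSet (h : M.IsState j0 xp pbar Λ)
    (hI : ∀ᵐ σ ∂Λ, σ ∈ M.interiorSet j0 xp) (hpbar : M.IsUCExtensionP pbar)
    (hxp : ∀ j, xp j ∈ M.Kset j) (hwb : M.IsUCExtensionW wb) (hw : ∀ e, Measurable (wb e)) :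
    M.adjOp (Measure.map (M.pastCode j0 xp) Λ) = Measure.map (M.pastCode j0 xp) Λ := by
  have hF := M.measurable_pastCode j0 xp
  refine Measure.ext_of_lintegral _ fun f hf => ?_
  rw [M.lintegral_adjOp hf, lintegral_map (M.measurable_markovOp hf) hF, lintegral_map hf hF,
    h.lintegral_pastCode hxp hwb hw hf]
  refine lintegral_congr_ae ?_
  filter_upwards [hI] with σ hσ
  exact tsum_congr fun e => (transProb_mul_eq hpbar hwb hσ e f).symm

theorem adjOp_map_pastCode_of_restrict_compl (h : M.IsState j0 xp pbar Λ)
    (hpbar : M.IsUCExtensionP pbar) (hxp : ∀ j, xp j ∈ M.Kset j) (hwb : M.IsUCExtensionW wb)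
    (hw : ∀ e, Measurable (wb e))
    (hcompl : M.adjOp (Measure.map (M.pastCode j0 xp) (Λ.restrict (M.interiorSet j0 xp)ᶜ)) =
      Measure.map (M.pastCode j0 xp) (Λ.restrict (M.interiorSet j0 xp)ᶜ)) :
    M.adjOp (Measure.map (M.pastCode j0 xp) Λ) = Measure.map (M.pastCode j0 xp) Λ := by
  have hI := M.measurableSet_interiorSet j0 xp
  have hI' := pastAlgebra_le _ hI
  have hinterior := (h.restrict hI (h.preimage_interiorSet_ae_eq hxp hwb)
    ).adjOp_map_pastCode_of_ae_mem_interiorSet (ae_restrict_mem hI') hpbar hxp hwb hw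
  rw [← Measure.restrict_add_restrict_compl (μ := Λ) hI',
    Measure.map_add _ _ (M.measurable_pastCode j0 xp), adjOp_add, hinterior, hcompl]

end IsState

end Decomposition

section BoundaryStates

variable {K : Type*} [MetricSpace K] [CompleteSpace K] [MeasurableSpace K] [BorelSpace K]
  {N E : Type*} [Countable E] {M : MarkovSystem K N E} {j0 : N} {xp : N → K}
  {q pbar : E → K → ℝ} {wb : E → K → K} {Λ : Measure (CodeSpace E)}

namespace IsState

theorem ae_forall_transProb_eq_zero_or_mem (h : M.IsState j0 xp q Λ)
    (hxp : ∀ j, xp j ∈ M.Kset j) (hwb : M.IsUCExtensionW wb) (hw : ∀ e, Measurable (wb e))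
    {B : Set K} (hB : MeasurableSet B) (hFB : ∀ᵐ σ ∂Λ, M.pastCode j0 xp σ ∈ B) :
    ∀ᵐ σ ∂Λ, ∀ e, M.transProb j0 xp q e σ = 0 ∨ wb e (M.pastCode j0 xp σ) ∈ B := by
  have hind : Measurable (Bᶜ.indicator 1 : K → ℝ≥0∞) := measurable_one.indicator hB.compl
  have hmeas : Measurable fun σ =>
      ∑' e, M.transProb j0 xp q e σ * Bᶜ.indicator 1 (wb e (M.pastCode j0 xp σ)) :=
    .tsum fun e => ((h.isCondProb e).measurable.mono pastAlgebra_le le_rfl).mul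
      (hind.comp ((hw e).comp (M.measurable_pastCode j0 xp)))
  have hzero : ∫⁻ σ, Bᶜ.indicator 1 (M.pastCode j0 xp σ) ∂Λ = 0 := by
    refine lintegral_eq_zero_of_ae_eq_zero ?_
    filter_upwards [hFB] with σ hσ using Set.indicator_of_notMem (Set.notMem_compl_iff.2 hσ) _
  rw [h.lintegral_pastCode hxp hwb hw hind, lintegral_eq_zero_iff hmeas] at hzero
  filter_upwards [hzero] with σ hσ e
  refine (mul_eq_zero.1 (ENNReal.tsum_eq_zero.1 hσ e)).imp_right fun he => ?_
  by_contra hmem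
  exact one_ne_zero ((Set.indicator_of_mem (Set.mem_compl hmem) _).symm.trans he)

theorem ae_one_le_iterate_Rop (h : M.IsState j0 xp (M.dp pbar) Λ) (hpbar : M.IsUCExtensionP pbar)
    (hxp : ∀ j, xp j ∈ M.Kset j) (hwb : M.IsUCExtensionW wb) (hw : ∀ e, Measurable (wb e))
    (n : ℕ) : ∀ᵐ σ ∂Λ, 1 ≤ (M.Rop pbar wb)^[n] (fun _ => 1) (M.pastCode j0 xp σ) := by
  induction n with
  | zero => exact .of_forall fun _ => le_rfl
  | succ n ih =>
    have hB : MeasurableSet {x | 1 ≤ (M.Rop pbar wb)^[n] (fun _ => 1) x} :=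
      measurableSet_le measurable_const (measurable_iterate_Rop hpbar hw n)
    filter_upwards [h.ae_tsum_transProb_eq_one,
      h.ae_forall_transProb_eq_zero_or_mem hxp hwb hw hB ih] with σ hone hσ
    rw [Function.iterate_succ_apply']
    refine hone.symm.trans_le (ENNReal.tsum_le_tsum fun e => ?_)
    obtain he | he := hσ e
    · exact he ▸ zero_le
    · exact le_mul_of_le_of_one_le (transProb_le e) he

theorem ae_code_mem_OmegaSet (h : M.IsState j0 xp (M.dp pbar) Λ)
    (hpbar : M.IsUCExtensionP pbar) (hxp : ∀ j, xp j ∈ M.Kset j) (hwb : M.IsUCExtensionW wb)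
    (hw : ∀ e, Measurable (wb e)) : ∀ᵐ σ ∂Λ, M.code j0 xp σ ∈ M.OmegaSet pbar wb := by
  filter_upwards [h.ae_mem_codeDomain,
    ae_all_iff.2 fun n => h.ae_one_le_iterate_Rop hpbar hxp hwb hw (n + 1)] with σ hσ hRop
  rw [code_eq_pastCode hσ]
  exact Set.mem_iInter.2 hRop

theorem adjOp_map_pastCode_of_Rop_le_markovOp (h : M.IsState j0 xp (M.dp pbar) Λ)
    (hpbar : M.IsUCExtensionP pbar) (hxp : ∀ j, xp j ∈ M.Kset j) (hwb : M.IsUCExtensionW wb)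
    (hw : ∀ e, Measurable (wb e))
    (hR : ∀ σ ∈ M.code j0 xp ⁻¹' M.OmegaSet pbar wb, ∀ f : K → ℝ≥0∞, Measurable f →
      (∃ C : ℝ≥0∞, C ≠ ⊤ ∧ ∀ x, f x ≤ C) →
        M.Rop pbar wb f (M.code j0 xp σ) ≤ M.markovOp f (M.code j0 xp σ)) :
    M.adjOp (Measure.map (M.pastCode j0 xp) Λ) = Measure.map (M.pastCode j0 xp) Λ := by
  have := h.isFiniteMeasure
  have hF := M.measurable_pastCode j0 xp
  set ν := Measure.map (M.pastCode j0 xp) Λ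
  have hle : ν ≤ M.adjOp ν := by
    refine Measure.le_iff.2 fun B hB => ?_
    have hind : Measurable (B.indicator 1 : K → ℝ≥0∞) := measurable_one.indicator hB
    calc ν B = ∫⁻ σ, B.indicator 1 (M.pastCode j0 xp σ) ∂Λ := by
          rw [← lintegral_indicator_one hB, lintegral_map hind hF]
      _ = ∫⁻ σ, ∑' e, M.transProb j0 xp (M.dp pbar) e σ *
            B.indicator 1 (wb e (M.pastCode j0 xp σ)) ∂Λ :=
          h.lintegral_pastCode hxp hwb hw hind
      _ ≤ ∫⁻ σ, M.markovOp (B.indicator 1) (M.pastCode j0 xp σ) ∂Λ := by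
          refine lintegral_mono_ae ?_
          filter_upwards [h.ae_mem_codeDomain, h.ae_code_mem_OmegaSet hpbar hxp hwb hw]
            with σ hσ hΩ
          have hRσ := hR σ hΩ _ hind ⟨1, ENNReal.one_ne_top, Set.indicator_le_self _ _⟩
          rw [code_eq_pastCode hσ] at hRσ
          exact (ENNReal.tsum_le_tsum fun e => mul_le_mul_left (transProb_le e) _).trans hRσ
      _ = M.adjOp ν B := by
          rw [← lintegral_indicator_one hB, M.lintegral_adjOp hind,
            lintegral_map (M.measurable_markovOp hind) hF]
  exact (Measure.eq_of_le_of_measure_univ_eq hle (M.adjOp_univ ν).symm).symm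

end IsState

end BoundaryStates

end MarkovSystem

section Consistency

open MarkovSystem

variable {K : Type*} [MetricSpace K] [CompleteSpace K] [MeasurableSpace K] [BorelSpace K]
  {N E : Type*} [Countable E]

theorem consistency_iff_perp_and_of_R_le_U_general
    (M : MarkovSystem K N E) (j0 : N) (xp : N → K) (hxp : ∀ j, xp j ∈ M.Kset j)
    (pbar : E → K → ℝ) (hpbar : M.IsUCExtensionP pbar)
    (wb : E → K → K) (hwb : M.IsUCExtensionW wb) :
    (M.IsConsistent j0 xp pbar ↔
      ∀ Λ : Measure (CodeSpace E), M.IsPerp j0 xp pbar Λ →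
        M.IsInvariantMeasure (Measure.map (M.code j0 xp) Λ)) ∧
    ((∀ σ ∈ (M.code j0 xp) ⁻¹' (M.OmegaSet pbar wb), ∀ f : K → ℝ≥0∞, Measurable f →
        (∃ C : ℝ≥0∞, C ≠ ⊤ ∧ ∀ x, f x ≤ C) →
        M.Rop pbar wb f (M.code j0 xp σ) ≤ M.markovOp f (M.code j0 xp σ)) →
      M.IsConsistent j0 xp pbar) := by
  obtain ⟨wm, hwm, hwm_meas, hRop⟩ := hwb.exists_measurable
  have hconsistent := forall_isAsymptotic_isInvariantMeasure_iff (M := M) (j0 := j0) (xp := xp)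
    hpbar.measurable hpbar.nonneg
  have hperp := forall_isAsymptotic_isInvariantMeasure_iff (M := M) (j0 := j0) (xp := xp)
    hpbar.measurable_dp hpbar.dp_nonneg
  have hiff : M.IsConsistent j0 xp pbar ↔ ∀ Λ, M.IsPerp j0 xp pbar Λ →
      M.IsInvariantMeasure (Measure.map (M.code j0 xp) Λ) := by
    refine hconsistent.trans <| .trans ⟨fun H Λ h => H Λ (h.of_dp hpbar hxp), fun H Λ h => ?_⟩
      hperp.symm
    exact h.adjOp_map_pastCode_of_restrict_compl hpbar hxp hwm hwm_meas
      (H _ (h.restrict_compl_interiorSet hpbar hxp hwm))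
  refine ⟨hiff, fun hR => hiff.2 (hperp.2 fun Λ h => ?_)⟩
  refine h.adjOp_map_pastCode_of_Rop_le_markovOp hpbar hxp hwm hwm_meas ?_
  simpa only [OmegaSet, hRop] using hR

end Consistency

/-- (i) A uniformly continuous `M` is consistent iff `F(Λ) ∈ P(M)` for
every `Λ ∈ E_⊥(M)`. (ii) `M` is consistent if moreover `(Rf)(F(σ)) ≤ (Uf)(F(σ))` for every
`σ ∈ F⁻¹(Ω)` and every bounded nonnegative Borel `f`. -/
theorem consistency_iff_perp_and_of_R_le_U
    (M : MarkovSystem K N E) (j0 : N) (xp : N → K) (hxp : ∀ j, xp j ∈ M.Kset j)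
    (huc : M.IsUniformlyContinuous)
    (pbar : E → K → ℝ) (hpbar : M.IsUCExtensionP pbar)
    (wb : E → K → K) (hwb : M.IsUCExtensionW wb) :
    (M.IsConsistent j0 xp pbar ↔
      ∀ Λ : Measure (CodeSpace E), M.IsPerp j0 xp pbar Λ →
        M.IsInvariantMeasure (Measure.map (M.code j0 xp) Λ)) ∧
    ((∀ σ ∈ (M.code j0 xp) ⁻¹' (M.OmegaSet pbar wb), ∀ f : K → ℝ≥0∞, Measurable f →
        (∃ C : ℝ≥0∞, C ≠ ⊤ ∧ ∀ x, f x ≤ C) →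
        M.Rop pbar wb f (M.code j0 xp σ) ≤ M.markovOp f (M.code j0 xp σ)) →
      M.IsConsistent j0 xp pbar) :=
  consistency_iff_perp_and_of_R_le_U_general M j0 xp hxp pbar hpbar wb hwb
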